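/- arXiv:1306.5116 — 3 statements merged into one kernel-verified Lean document; each statement's English description precedes it below -/
import Mathlib

section
/- Assume the standing assumptions, that NW ≠ ∅, and let β > β₀. Then for all v, w ∈ NW one has ∑_{n=0}^∞ A^n_{vw} e^{-nβ} = I_{vw} + (∑_{n=1}^∞ r_{vw}(n) e^{-nβ}) · (∑_{n=0}^∞ A^n_{ww} e^{-nβ}), where I_{vw} = 1 if v = w and 0 otherwise. -/
open scoped ENNReal
open Filter

variable {V : Type*}

/-- The set of vertices of the graph of `A` that emit no edges or infinitely many edges. -/
def VInf (A : V → V → ℝ≥0∞) : Set V :=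
  {v | {w | A v w ≠ 0} = ∅ ∨ {w | A v w ≠ 0}.Infinite}

/-- A set of vertices is hereditary if every edge with source in it has range in it. -/
def Hereditary (A : V → V → ℝ≥0∞) (H : Set V) : Prop :=
  ∀ ⦃v w : V⦄, v ∈ H → A v w ≠ 0 → w ∈ H

/-- A set of vertices is saturated if it contains every finite emitter all of whose
out-neighbours lie in it. -/
def Saturated (A : V → V → ℝ≥0∞) (H : Set V) : Prop :=
  ∀ v : V, v ∉ VInf A → (∀ w, A v w ≠ 0 → w ∈ H) → v ∈ H

/-- `A` is cofinal if the only hereditary and saturated subsets are `∅` and `V`. -/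
def Cofinal (A : V → V → ℝ≥0∞) : Prop :=
  ∀ H : Set V, Hereditary A H → Saturated A H → H = ∅ ∨ H = Set.univ

/-- Matrix powers of `A`, with entries in `[0,∞]`. -/
noncomputable def Apow [DecidableEq V] (A : V → V → ℝ≥0∞) : ℕ → V → V → ℝ≥0∞
  | 0 => fun v w => if v = w then 1 else 0
  | n + 1 => fun v w => ∑' u, A v u * Apow A n u w

/-- `e^β` as an extended nonnegative real. -/
noncomputable def expb (β : ℝ) : ℝ≥0∞ := ENNReal.ofReal (Real.exp β)

/-- `e^{-nβ}` as an extended nonnegative real. -/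
noncomputable def expn (β : ℝ) (n : ℕ) : ℝ≥0∞ := ENNReal.ofReal (Real.exp (-(n : ℝ) * β))

/-- A vector `ξ : V → [0,∞)` is almost `β`-harmonic for `A` if
`∑_w A_{vw} ξ_w = e^β ξ_v` off `V_∞` and `∑_w A_{vw} ξ_w ≤ e^β ξ_v` on `V_∞`. -/
def IsAlmostHarmonic (A : V → V → ℝ≥0∞) (β : ℝ) (ξ : V → ℝ≥0∞) : Prop :=
  (∀ v, ξ v ≠ ⊤) ∧
  (∀ v, v ∉ VInf A → ∑' w, A v w * ξ w = expb β * ξ v) ∧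
  (∀ v, v ∈ VInf A → ∑' w, A v w * ξ w ≤ expb β * ξ v)

/-- A vector `ξ : V → [0,∞)` is `β`-harmonic for `A` if `∑_w A_{vw} ξ_w = e^β ξ_v`
for every vertex `v`. -/
def IsHarmonic (A : V → V → ℝ≥0∞) (β : ℝ) (ξ : V → ℝ≥0∞) : Prop :=
  (∀ v, ξ v ≠ ⊤) ∧ ∀ v, ∑' w, A v w * ξ w = expb β * ξ v

/-- The non-wandering vertices: those admitting a loop of positive length. -/
def NW (A : V → V → ℝ≥0∞) : Set V :=
  {v | Relation.TransGen (fun a b => A a b ≠ 0) v v}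

/-- Standing assumptions i)–iii): `A` is cofinal, the graph has no sinks, the entries of
`A` are finite and all powers of `A` have finite entries. -/
def Standing [DecidableEq V] (A : V → V → ℝ≥0∞) : Prop :=
  Cofinal A ∧ (∀ v, ∃ w, A v w ≠ 0) ∧ (∀ v w, A v w ≠ ⊤) ∧
    ∀ (n : ℕ) (v w : V), Apow A n v w ≠ ⊤

/-- A function `k` supported on `V_∞` is `β`-summable when
`∑_{u ∈ V_∞} ∑_n e^{-nβ} A^n_{uu} k_u < ∞`. -/
def BSummable [DecidableEq V] (A : V → V → ℝ≥0∞) (β : ℝ) (k : V → ℝ≥0∞) : Prop :=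
  (∀ u, u ∉ VInf A → k u = 0) ∧ (∑' u, ∑' n, expn β n * Apow A n u u * k u) ≠ ⊤

/-- `k̂_v = ∑_{u ∈ V_∞} ∑_n e^{-nβ} A^n_{vu} k_u` (for `k` supported on `V_∞`). -/
noncomputable def khat [DecidableEq V] (A : V → V → ℝ≥0∞) (β : ℝ) (k : V → ℝ≥0∞) (v : V) :
    ℝ≥0∞ :=
  ∑' u, ∑' n, expn β n * Apow A n v u * k u

/-- The first-return quantities `r_{vw}(n)`: `r_{vw}(0) = 0`, `r_{vw}(1) = A_{vw}` and
`r_{vw}(n+1) = ∑_{u ≠ w} A_{vu} r_{uw}(n)` for `n ≥ 1`. -/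
noncomputable def fr [DecidableEq V] (A : V → V → ℝ≥0∞) (w : V) : ℕ → V → ℝ≥0∞
  | 0 => fun _ => 0
  | 1 => fun v => A v w
  | n + 2 => fun v => ∑' u, if u = w then 0 else A v u * fr A w (n + 1) u

theorem expn_zero (β : ℝ) : expn β 0 = 1 := by simp [expn]

theorem expn_add (β : ℝ) (m n : ℕ) : expn β (m + n) = expn β m * expn β n := by
  rw [expn, expn, expn, ← ENNReal.ofReal_mul (Real.exp_pos _).le, ← Real.exp_add]
  congr 2
  push_cast
  ring

/-- The Cauchy product of two series in `[0,∞]`. -/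
theorem ENNReal.tsum_mul_tsum_eq_tsum_antidiagonal (f g : ℕ → ℝ≥0∞) :
    (∑' n, f n) * ∑' n, g n =
      ∑' n, ∑ p ∈ Finset.HasAntidiagonal.antidiagonal n, f p.1 * g p.2 := by
  calc (∑' n, f n) * ∑' n, g n = ∑' p : ℕ × ℕ, f p.1 * g p.2 := by
        rw [ENNReal.tsum_prod (f := fun i j => f i * g j), ← ENNReal.tsum_mul_right]
        exact tsum_congr fun i => ENNReal.tsum_mul_left.symm
    _ = ∑' q : Σ n : ℕ, Finset.HasAntidiagonal.antidiagonal n, f q.2.1.1 * g q.2.1.2 :=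
        (Finset.HasAntidiagonal.sigmaAntidiagonalEquivProd.tsum_eq
          fun p : ℕ × ℕ => f p.1 * g p.2).symm
    _ = ∑' n, ∑ p ∈ Finset.HasAntidiagonal.antidiagonal n, f p.1 * g p.2 := by
        rw [ENNReal.tsum_sigma']
        refine tsum_congr fun n => ?_
        exact Finset.tsum_subtype (Finset.HasAntidiagonal.antidiagonal n)
          fun p : ℕ × ℕ => f p.1 * g p.2

/-- First-passage decomposition: a path of positive length from `v` to `w` splits at its first
visit to `w` after the start. -/
theorem Apow_succ_eq_sum_antidiagonal [DecidableEq V] (A : V → V → ℝ≥0∞) (n : ℕ) (v w : V) :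
    Apow A (n + 1) v w =
      ∑ p ∈ Finset.HasAntidiagonal.antidiagonal n, fr A w (p.1 + 1) v * Apow A p.2 w w := by
  induction n generalizing v with
  | zero => simp [Apow, fr]
  | succ n ih =>
    rw [Finset.Nat.sum_antidiagonal_succ]
    calc Apow A (n + 1 + 1) v w = ∑' u, A v u * Apow A (n + 1) u w := rfl
      _ = A v w * Apow A (n + 1) w w + ∑' u, if u = w then 0 else A v u * Apow A (n + 1) u w := by
          convert ENNReal.tsum_eq_add_tsum_ite (f := fun u => A v u * Apow A (n + 1) u w) w
      _ = A v w * Apow A (n + 1) w w +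
            ∑' u, ∑ p ∈ Finset.HasAntidiagonal.antidiagonal n,
              (if u = w then 0 else A v u * fr A w (p.1 + 1) u) * Apow A p.2 w w := by
          congr 1
          refine tsum_congr fun u => ?_
          split_ifs with h
          · simp
          · simp only [ih u, Finset.mul_sum, mul_assoc]
      _ = _ := by
          rw [Summable.tsum_finsetSum fun _ _ => ENNReal.summable]
          simp only [ENNReal.tsum_mul_right]
          rfl

/-- Under the standing assumptions, if `NW ≠ ∅` and `β > β₀`, then for all
`v, w ∈ NW`:
`∑_n A^n_{vw} e^{-nβ} = I_{vw} + (∑_n r_{vw}(n) e^{-nβ}) (∑_n A^n_{ww} e^{-nβ})`. -/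
theorem stmt12 [Countable V] [DecidableEq V] (A : V → V → ℝ≥0∞)
    (hst : Standing A) (β₀ : ℝ)
    (hβ₀ : ∀ v ∈ NW A,
      Filter.limsup (fun n : ℕ => Apow A n v v ^ ((n : ℝ)⁻¹)) Filter.atTop = expb β₀)
    (hNW : (NW A).Nonempty) (β : ℝ) (hβ : β₀ < β) :
    ∀ v ∈ NW A, ∀ w ∈ NW A,
      ∑' n : ℕ, Apow A n v w * expn β n =
        (if v = w then (1 : ℝ≥0∞) else 0) +
          (∑' n : ℕ, fr A w n v * expn β n) * ∑' n : ℕ, Apow A n w w * expn β n := by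
  intro v _ w _
  have hA := tsum_eq_zero_add' (f := fun n => Apow A n v w * expn β n) ENNReal.summable
  have hr := tsum_eq_zero_add' (f := fun n => fr A w n v * expn β n) ENNReal.summable
  simp only [expn_zero, mul_one, fr, zero_add] at hA hr
  rw [hA, hr, ENNReal.tsum_mul_tsum_eq_tsum_antidiagonal]
  congr 1
  refine tsum_congr fun n => ?_
  rw [Apow_succ_eq_sum_antidiagonal, Finset.sum_mul]
  refine Finset.sum_congr rfl fun p hp => ?_
  rw [← Finset.HasAntidiagonal.mem_antidiagonal.mp hp, add_right_comm, expn_add]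
  ring
end

section
/- Assume the standing assumptions and let β ∈ ℝ. Let ξ : V → [0,∞) satisfy ∑_{w∈V} A_{vw} ξ_w ≤ e^β ξ_v for all v ∈ V, and assume ξ_{v₀} ≠ 0 for some vertex v₀ ∈ V. Then ∑_{n=1}^∞ r_{vv₀}(n) e^{-nβ} ≤ ξ_v / ξ_{v₀} for all v ∈ V. -/
open scoped ENNReal
open Filter

variable {V : Type*}

theorem expn_succ (β : ℝ) (n : ℕ) : expn β (n + 1) = expn β 1 * expn β n := by
  unfold expn
  rw [← ENNReal.ofReal_mul (Real.exp_pos _).le, ← Real.exp_add]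
  congr 2
  push_cast
  ring

theorem expn_one_mul_expb (β : ℝ) : expn β 1 * expb β = 1 := by
  unfold expn expb
  rw [← ENNReal.ofReal_mul (Real.exp_pos _).le, ← Real.exp_add]
  simp

/-- The two cases of the first-return recursion in a single formula. -/
theorem fr_succ [DecidableEq V] (A : V → V → ℝ≥0∞) (w : V) (n : ℕ) (v : V) :
    fr A w (n + 1) v =
      ∑' u, A v u * (if u = w then (if n = 0 then 1 else 0) else fr A w n u) := by
  cases n with
  | zero =>
    rw [tsum_eq_single w (fun u hu => by simp [hu, fr])]
    simp [fr]
  | succ n =>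
    simp only [fr]
    refine tsum_congr fun u => ?_
    split_ifs <;> simp_all

/-- Partial sums of the first-return series at `w` are dominated by any
nonnegative `β`-superharmonic vector. -/
theorem sum_fr_mul_expn_mul_le [DecidableEq V] (A : V → V → ℝ≥0∞) (β : ℝ) (ξ : V → ℝ≥0∞)
    (hsub : ∀ v, ∑' w, A v w * ξ w ≤ expb β * ξ v) (w : V) (N : ℕ) (v : V) :
    (∑ n ∈ Finset.range N, fr A w n v * expn β n) * ξ w ≤ ξ v := by
  induction N generalizing v with
  | zero => simp
  | succ N ih =>
    let g : ℕ → V → ℝ≥0∞ := fun n u => if u = w then (if n = 0 then 1 else 0) else fr A w n u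
    have hg : ∀ u, (∑ n ∈ Finset.range N, g n u * expn β n) * ξ w ≤ ξ u := by
      intro u
      by_cases hu : u = w
      · subst hu
        have hle : ∑ n ∈ Finset.range N, g n u * expn β n ≤ 1 := by
          simp only [g, if_true, ite_mul, one_mul, zero_mul, Finset.sum_ite_eq']
          split_ifs <;> simp [expn_zero]
        exact mul_le_of_le_one_left' hle
      · simpa [g, hu] using ih u
    have hsum : ∑ n ∈ Finset.range (N + 1), fr A w n v * expn β n =
        expn β 1 * ∑' u, A v u * ∑ n ∈ Finset.range N, g n u * expn β n := by
      rw [Finset.sum_range_succ']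
      simp only [Finset.mul_sum]
      rw [Summable.tsum_finsetSum fun _ _ => ENNReal.summable, Finset.mul_sum]
      simp only [fr, zero_mul, add_zero]
      refine Finset.sum_congr rfl fun n _ => ?_
      rw [fr_succ, expn_succ, mul_left_comm, ← ENNReal.tsum_mul_right]
      simp only [g, mul_assoc]
    calc (∑ n ∈ Finset.range (N + 1), fr A w n v * expn β n) * ξ w
        = expn β 1 * ∑' u, A v u * ((∑ n ∈ Finset.range N, g n u * expn β n) * ξ w) := by
          rw [hsum, mul_assoc, ← ENNReal.tsum_mul_right]
          simp only [mul_assoc]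
      _ ≤ expn β 1 * ∑' u, A v u * ξ u := by
          gcongr with u
          exact hg u
      _ ≤ expn β 1 * (expb β * ξ v) := by
          gcongr
          exact hsub v
      _ = ξ v := by rw [← mul_assoc, expn_one_mul_expb, one_mul]

/-- Under the standing assumptions, if `ξ : V → [0,∞)` satisfies
`∑_w A_{vw} ξ_w ≤ e^β ξ_v` for all `v` and `ξ_{v₀} ≠ 0`, then
`∑_{n≥1} r_{vv₀}(n) e^{-nβ} ≤ ξ_v / ξ_{v₀}` for all `v`. -/
theorem stmt13 [Countable V] [DecidableEq V] (A : V → V → ℝ≥0∞)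
    (hst : Standing A) (β : ℝ) (ξ : V → ℝ≥0∞) (hξfin : ∀ v, ξ v ≠ ⊤)
    (hsub : ∀ v, ∑' w, A v w * ξ w ≤ expb β * ξ v)
    (v₀ : V) (h0 : ξ v₀ ≠ 0) :
    ∀ v, ∑' n : ℕ, fr A v₀ n v * expn β n ≤ ξ v / ξ v₀ := by
  intro v
  rw [ENNReal.le_div_iff_mul_le (Or.inl h0) (Or.inl (hξfin v₀)), ENNReal.tsum_eq_iSup_nat,
    ENNReal.iSup_mul]
  exact iSup_le fun N => sum_fr_mul_expn_mul_le A β ξ hsub v₀ N v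
end

section
/- Assume the standing assumptions and that NW is non-empty but finite. Then A is recurrent, and for every β > β₀ there is no non-zero β-harmonic vector for A. -/
open scoped ENNReal
open Filter

variable {V : Type*}

open Topology

theorem expn_eq_pow (β : ℝ) (n : ℕ) : expn β n = expb (-β) ^ n := by
  rw [expn, expb, ← ENNReal.ofReal_pow (Real.exp_pos _).le, ← Real.exp_nat_mul]
  congr 2
  ring

theorem expb_ne_zero (β : ℝ) : expb β ≠ 0 := by simp [expb, Real.exp_pos]

theorem expb_ne_top (β : ℝ) : expb β ≠ ⊤ := ENNReal.ofReal_ne_top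

theorem expb_mul_expb_neg (β : ℝ) : expb β * expb (-β) = 1 := by
  rw [expb, expb, ← ENNReal.ofReal_mul (Real.exp_pos _).le, ← Real.exp_add]
  simp

theorem expb_lt_expb {a b : ℝ} (h : a < b) : expb a < expb b :=
  (ENNReal.ofReal_lt_ofReal_iff (Real.exp_pos _)).2 (Real.exp_lt_exp.2 h)

theorem continuous_expb : Continuous expb :=
  ENNReal.continuous_ofReal.comp Real.continuous_exp

section NonWandering

variable {A : V → V → ℝ≥0∞}

theorem Cofinal.transGen_of_mem_NW (hA : Cofinal A) (w : V) {x : V} (hx : x ∈ NW A) :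
    Relation.TransGen (fun a b => A a b ≠ 0) w x := by
  let H : Set V := {u | ∀ y ∈ NW A, Relation.TransGen (fun a b => A a b ≠ 0) u y →
    Relation.TransGen (fun a b => A a b ≠ 0) w y}
  have hH : H = ∅ ∨ H = Set.univ := by
    refine hA H (fun u u' hu huu' y hy h => hu y hy (h.head huu')) fun u _ hu y hy h => ?_
    rcases Relation.TransGen.head'_iff.1 h with ⟨z, hz, hzy⟩
    rcases Relation.reflTransGen_iff_eq_or_transGen.1 hzy with rfl | hzy
    · exact hu _ hz _ hy hy
    · exact hu z hz y hy hzy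
  have hw : w ∈ H := fun _ _ h => h
  rcases hH with hH | hH
  · exact absurd hw (by simp [hH])
  · exact (hH ▸ Set.mem_univ x : x ∈ H) x hx hx

theorem Cofinal.hereditary_NW (hA : Cofinal A) : Hereditary A (NW A) :=
  fun _ w hv hvw => (hA.transGen_of_mem_NW w hv).tail hvw

/-- The zero set of a harmonic vector is hereditary and saturated. -/
theorem IsHarmonic.eq_zero_or_pos (hA : Cofinal A) {β : ℝ} {ξ : V → ℝ≥0∞}
    (hξ : IsHarmonic A β ξ) : ξ = 0 ∨ ∀ v, ξ v ≠ 0 := by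
  have hzero : ∀ v, ξ v = 0 ↔ ∀ w, A v w ≠ 0 → ξ w = 0 := fun v => by
    have h := hξ.2 v
    constructor
    · intro hv w hvw
      rw [hv, mul_zero, ENNReal.tsum_eq_zero] at h
      exact (mul_eq_zero.1 (h w)).resolve_left hvw
    · intro hv
      rw [ENNReal.tsum_eq_zero.2 fun w => mul_eq_zero.2 (or_iff_not_imp_left.2 (hv w))] at h
      exact (mul_eq_zero.1 h.symm).resolve_left (expb_ne_zero β)
  rcases hA {v | ξ v = 0} (fun v w hv => (hzero v).1 hv w) (fun v _ hv => (hzero v).2 hv)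
    with h | h
  · exact Or.inr fun v hv => by
      have : v ∈ {v | ξ v = 0} := hv
      simp [h] at this
  · exact Or.inl <| funext fun v => Set.eq_univ_iff_forall.1 h v

end NonWandering

section Powers

variable [DecidableEq V] {A : V → V → ℝ≥0∞}

theorem Apow_succ (A : V → V → ℝ≥0∞) (n : ℕ) (v w : V) :
    Apow A (n + 1) v w = ∑' u, A v u * Apow A n u w := rfl

theorem tsum_Apow_zero_mul (A : V → V → ℝ≥0∞) (v : V) (ξ : V → ℝ≥0∞) :
    ∑' u, Apow A 0 v u * ξ u = ξ v := by
  rw [tsum_eq_single v fun u hu => by simp [Apow, hu.symm]]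
  simp [Apow]

theorem tsum_Apow_succ_mul (A : V → V → ℝ≥0∞) (n : ℕ) (v : V) (ξ : V → ℝ≥0∞) :
    ∑' u, Apow A (n + 1) v u * ξ u = ∑' x, A v x * ∑' u, Apow A n x u * ξ u := by
  simp_rw [Apow_succ, ← ENNReal.tsum_mul_right, ← ENNReal.tsum_mul_left]
  rw [ENNReal.tsum_comm]
  simp_rw [mul_assoc]

theorem Apow_add (A : V → V → ℝ≥0∞) (m n : ℕ) (v w : V) :
    Apow A (m + n) v w = ∑' u, Apow A m v u * Apow A n u w := by
  induction m generalizing v with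
  | zero => rw [tsum_Apow_zero_mul, zero_add]
  | succ m ih =>
    rw [Nat.add_right_comm, Apow_succ, tsum_Apow_succ_mul]
    exact tsum_congr fun u => by rw [ih]

theorem Apow_mul_le (A : V → V → ℝ≥0∞) (m n : ℕ) (v u w : V) :
    Apow A m v u * Apow A n u w ≤ Apow A (m + n) v w :=
  (ENNReal.le_tsum (f := fun u => Apow A m v u * Apow A n u w) u).trans_eq
    (Apow_add A m n v w).symm

theorem exists_Apow_ne_zero {v w : V} (h : Relation.TransGen (fun a b => A a b ≠ 0) v w) :
    ∃ n, Apow A n v w ≠ 0 := by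
  induction h using Relation.TransGen.head_induction_on with
  | @single a hab =>
    refine ⟨1, fun h => hab ?_⟩
    simpa [Apow] using ENNReal.tsum_eq_zero.1 h w
  | @head a b hab _ ih =>
    obtain ⟨n, hn⟩ := ih
    exact ⟨n + 1, fun h => mul_ne_zero hab hn (ENNReal.tsum_eq_zero.1 h b)⟩

theorem Hereditary.Apow_eq_zero {N : Set V} (hN : Hereditary A N) (n : ℕ) {v w : V}
    (hv : v ∈ N) (hw : w ∉ N) : Apow A n v w = 0 := by
  induction n generalizing v with
  | zero => simp only [Apow]; exact if_neg fun h => hw (by rwa [← h])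
  | succ n ih =>
    refine ENNReal.tsum_eq_zero.2 fun u => ?_
    by_cases h : A v u = 0
    · simp [h]
    · simp [ih (hN hv h)]

theorem IsHarmonic.tsum_Apow_mul {β : ℝ} {ξ : V → ℝ≥0∞} (hξ : IsHarmonic A β ξ) (n : ℕ) (v : V) :
    ∑' w, Apow A n v w * ξ w = expb β ^ n * ξ v := by
  induction n generalizing v with
  | zero => rw [tsum_Apow_zero_mul, pow_zero, one_mul]
  | succ n ih =>
    simp_rw [tsum_Apow_succ_mul, ih, mul_left_comm _ (expb β ^ n), ENNReal.tsum_mul_left, hξ.2,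
      pow_succ, mul_assoc]

theorem tendsto_Apow_mul_pow (hA : ∀ n v w, Apow A n v w ≠ ⊤) {r : ℝ≥0∞} (hr : r ≠ 0)
    (hr_top : r ≠ ⊤) {u v w : V}
    (hvu : Relation.TransGen (fun a b => A a b ≠ 0) v u)
    (hwv : Relation.TransGen (fun a b => A a b ≠ 0) w v)
    (h : Tendsto (fun n => Apow A n v v * r ^ n) atTop (𝓝 0)) :
    Tendsto (fun n => Apow A n u w * r ^ n) atTop (𝓝 0) := by
  obtain ⟨j, hj⟩ := exists_Apow_ne_zero hvu
  obtain ⟨k, hk⟩ := exists_Apow_ne_zero hwv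
  have hd : Apow A j v u * Apow A k w v * r ^ (j + k) ≠ 0 :=
    mul_ne_zero (mul_ne_zero hj hk) (pow_ne_zero _ hr)
  have hd_top : Apow A j v u * Apow A k w v * r ^ (j + k) ≠ ⊤ :=
    ENNReal.mul_ne_top (ENNReal.mul_ne_top (hA _ _ _) (hA _ _ _)) (ENNReal.pow_ne_top hr_top)
  have hlim := ENNReal.Tendsto.div_const ((tendsto_add_atTop_iff_nat (j + k)).2 h)
    (b := Apow A j v u * Apow A k w v * r ^ (j + k)) (Or.inr hd)
  rw [ENNReal.zero_div] at hlim
  refine tendsto_of_tendsto_of_tendsto_of_le_of_le tendsto_const_nhds hlim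
    (fun _ => zero_le) fun n => ?_
  refine (ENNReal.le_div_iff_mul_le (Or.inl hd) (Or.inl hd_top)).2 ?_
  calc Apow A n u w * r ^ n * (Apow A j v u * Apow A k w v * r ^ (j + k))
      = Apow A j v u * Apow A n u w * Apow A k w v * r ^ (n + (j + k)) := by ring
    _ ≤ Apow A (j + n) v w * Apow A k w v * r ^ (n + (j + k)) := by
        gcongr
        exact Apow_mul_le A j n v u w
    _ ≤ Apow A (j + n + k) v v * r ^ (n + (j + k)) := by
        gcongr
        exact Apow_mul_le A (j + n) k v w v
    _ = Apow A (n + (j + k)) v v * r ^ (n + (j + k)) := by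
        rw [show j + n + k = n + (j + k) by omega]

/-- The row sums of the matrix powers grow at most like `r ^ (-n)` on a finite hereditary set
as soon as the row sums of one positive power `m` are bounded by `r ^ (-m)`. -/
theorem exists_tsum_Apow_mul_pow_le {N : Set V} (hN : Hereditary A N) (hfin : N.Finite)
    (hA : ∀ n v w, Apow A n v w ≠ ⊤) {r : ℝ≥0∞} (hr : r ≠ ⊤) {m : ℕ} (hm : m ≠ 0)
    (h : ∀ v ∈ N, (∑' w, Apow A m v w) * r ^ m ≤ 1) :
    ∃ K ≠ ⊤, ∀ n, ∀ v ∈ N, (∑' w, Apow A n v w) * r ^ n ≤ K := by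
  have hsum : ∀ n, ∀ v ∈ N, ∑' w, Apow A n v w = ∑ w ∈ hfin.toFinset, Apow A n v w :=
    fun n v hv => tsum_eq_sum fun w hw => hN.Apow_eq_zero n hv (by simpa using hw)
  refine ⟨∑ j ∈ Finset.range m, ∑ v ∈ hfin.toFinset, (∑' w, Apow A j v w) * r ^ j, ?_, ?_⟩
  · refine ENNReal.sum_ne_top.2 fun j _ => ENNReal.sum_ne_top.2 fun v hv => ?_
    rw [hsum j v (by simpa using hv)]
    exact ENNReal.mul_ne_top (ENNReal.sum_ne_top.2 fun w _ => hA j v w) (ENNReal.pow_ne_top hr)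
  · set K := ∑ j ∈ Finset.range m, ∑ v ∈ hfin.toFinset, (∑' w, Apow A j v w) * r ^ j
    intro n
    induction n using Nat.strong_induction_on with
    | _ n ih =>
      intro v hv
      by_cases hn : n < m
      · calc (∑' w, Apow A n v w) * r ^ n
            ≤ ∑ v ∈ hfin.toFinset, (∑' w, Apow A n v w) * r ^ n :=
              Finset.single_le_sum (f := fun v => (∑' w, Apow A n v w) * r ^ n)
                (fun _ _ => zero_le) (by simpa using hv)
          _ ≤ K := Finset.single_le_sum
                (f := fun j => ∑ v ∈ hfin.toFinset, (∑' w, Apow A j v w) * r ^ j)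
                (fun _ _ => zero_le) (by simpa using hn)
      · obtain ⟨k, rfl⟩ := Nat.exists_eq_add_of_le (not_lt.1 hn)
        calc (∑' w, Apow A (m + k) v w) * r ^ (m + k)
            = (∑' u, Apow A m v u * ((∑' w, Apow A k u w) * r ^ k)) * r ^ m := by
              simp_rw [Apow_add, ← mul_assoc, ENNReal.tsum_mul_right, ← ENNReal.tsum_mul_left]
              rw [ENNReal.tsum_comm, pow_add]
              ring
          _ ≤ (∑' u, Apow A m v u * K) * r ^ m := by
              gcongr ?_ * _
              refine ENNReal.tsum_le_tsum fun u => ?_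
              by_cases hu : u ∈ N
              · gcongr
                exact ih k (by omega) u hu
              · simp [hN.Apow_eq_zero m hv hu]
          _ = K * ((∑' u, Apow A m v u) * r ^ m) := by
              rw [ENNReal.tsum_mul_right]
              ring
          _ ≤ K := mul_le_of_le_one_right zero_le (h v hv)

end Powers

/-- A sequence bounded by a multiple of `e^{nβ}` has exponential growth rate at most `e^β`. -/
theorem limsup_rpow_inv_le {a : ℕ → ℝ≥0∞} {β : ℝ} {K : ℝ≥0∞} (hK : K ≠ ⊤)
    (h : ∀ n, a n * expb (-β) ^ n ≤ K) :
    limsup (fun n : ℕ => a n ^ ((n : ℝ)⁻¹)) atTop ≤ expb β := by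
  have hK1 : K + 1 ≠ ⊤ := by simp [hK]
  have hlim : Tendsto (fun n : ℕ => (K + 1) ^ ((n : ℝ)⁻¹) * expb β) atTop (𝓝 (1 * expb β)) := by
    refine ENNReal.Tendsto.mul_const ?_ (Or.inl one_ne_zero)
    have h0 : Tendsto (fun n : ℕ => ((n : ℝ)⁻¹)) atTop (𝓝 0) := tendsto_inv_atTop_nhds_zero_nat
    lift K + 1 to NNReal using hK1 with L hL
    have hL0 : L ≠ 0 := by
      rintro rfl
      exact (one_pos.trans_le le_add_self).ne (ENNReal.coe_zero ▸ hL)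
    have := (NNReal.continuousAt_rpow (x := L) (y := 0) (Or.inl hL0)).tendsto.comp
      ((tendsto_const_nhds (x := L)).prodMk_nhds h0)
    simp_rw [← ENNReal.coe_rpow_of_ne_zero hL0]
    rw [← ENNReal.coe_one, ENNReal.tendsto_coe]
    simpa [Function.comp_def] using this
  rw [one_mul] at hlim
  rw [← hlim.limsup_eq]
  refine limsup_le_limsup ?_
  filter_upwards [eventually_ne_atTop 0] with n hn
  have hn' : (n : ℝ) ≠ 0 := Nat.cast_ne_zero.2 hn
  have hle : a n ≤ (K + 1) * expb β ^ n := by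
    calc a n = a n * expb (-β) ^ n * expb β ^ n := by
          rw [mul_assoc, ← mul_pow, mul_comm (expb (-β)), expb_mul_expb_neg, one_pow, mul_one]
      _ ≤ (K + 1) * expb β ^ n := by
          gcongr
          exact (h n).trans le_self_add
  calc a n ^ ((n : ℝ)⁻¹) ≤ ((K + 1) * expb β ^ n) ^ ((n : ℝ)⁻¹) :=
        ENNReal.rpow_le_rpow hle (by positivity)
    _ = (K + 1) ^ ((n : ℝ)⁻¹) * expb β := by
        rw [ENNReal.mul_rpow_of_nonneg _ _ (by positivity), ← ENNReal.rpow_natCast,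
          ← ENNReal.rpow_mul, mul_inv_cancel₀ hn', ENNReal.rpow_one]

theorem tendsto_mul_pow_of_limsup_lt {a : ℕ → ℝ≥0∞} {β : ℝ}
    (h : limsup (fun n : ℕ => a n ^ ((n : ℝ)⁻¹)) atTop < expb β) :
    Tendsto (fun n => a n * expb (-β) ^ n) atTop (𝓝 0) := by
  obtain ⟨c, hc, hcβ⟩ := exists_between h
  have hlt : c * expb (-β) < 1 := by
    rw [← expb_mul_expb_neg β]
    exact (ENNReal.mul_lt_mul_iff_left (expb_ne_zero _) (expb_ne_top _)).2 hcβ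
  refine tendsto_of_tendsto_of_tendsto_of_le_of_le' tendsto_const_nhds
    (ENNReal.tendsto_pow_atTop_nhds_zero_of_lt_one hlt) (Eventually.of_forall fun _ => zero_le) ?_
  filter_upwards [eventually_lt_of_limsup_lt hc, eventually_ne_atTop 0] with n hn hn0
  have hn' : (n : ℝ) ≠ 0 := Nat.cast_ne_zero.2 hn0
  rw [mul_pow]
  gcongr
  calc a n = (a n ^ ((n : ℝ)⁻¹)) ^ n := by
        rw [← ENNReal.rpow_natCast, ← ENNReal.rpow_mul, inv_mul_cancel₀ hn', ENNReal.rpow_one]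
    _ ≤ c ^ n := by gcongr

/-- Under the standing assumptions, if `NW` is non-empty and finite then
`A` is recurrent and for every `β > β₀` there is no non-zero `β`-harmonic vector. -/
theorem stmt14 [Countable V] [DecidableEq V] (A : V → V → ℝ≥0∞)
    (hst : Standing A) (β₀ : ℝ)
    (hβ₀ : ∀ v ∈ NW A,
      Filter.limsup (fun n : ℕ => Apow A n v v ^ ((n : ℝ)⁻¹)) Filter.atTop = expb β₀)
    (hne : (NW A).Nonempty) (hfin : (NW A).Finite) :
    (∀ v ∈ NW A, ∑' n : ℕ, Apow A n v v * expn β₀ n = ⊤) ∧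
      ∀ β : ℝ, β₀ < β → ∀ ξ : V → ℝ≥0∞, IsHarmonic A β ξ → ξ = 0 := by
  obtain ⟨hcof, -, -, hpow⟩ := hst
  have hN : Hereditary A (NW A) := hcof.hereditary_NW
  have htend : ∀ (β : ℝ) (v : V), v ∈ NW A →
      Tendsto (fun n => Apow A n v v * expb (-β) ^ n) atTop (𝓝 0) → ∀ u ∈ NW A, ∀ w ∈ NW A,
      Tendsto (fun n => Apow A n u w * expb (-β) ^ n) atTop (𝓝 0) :=
    fun β v hv h u hu w _ => tendsto_Apow_mul_pow hpow (expb_ne_zero _) (expb_ne_top _)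
      (hcof.transGen_of_mem_NW v hu) (hcof.transGen_of_mem_NW w hv) h
  have hsum : ∀ (f : V → ℝ≥0∞) (n : ℕ), ∀ v ∈ NW A,
      ∑' w, Apow A n v w * f w = ∑ w ∈ hfin.toFinset, Apow A n v w * f w :=
    fun f n v hv => tsum_eq_sum fun w hw => by
      rw [hN.Apow_eq_zero n hv (by simpa using hw), zero_mul]
  constructor
  · intro v hv
    by_contra hv_sum
    simp_rw [expn_eq_pow] at hv_sum
    have hrow : ∀ u ∈ NW A,
        Tendsto (fun n => (∑' w, Apow A n u w) * expb (-β₀) ^ n) atTop (𝓝 0) := by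
      intro u hu
      have h := tendsto_finsetSum hfin.toFinset fun w hw =>
        htend β₀ v hv (ENNReal.tendsto_atTop_zero_of_tsum_ne_top hv_sum) u hu w (by simpa using hw)
      simp_rw [← ENNReal.tsum_mul_right, fun n => hsum (fun _ => expb (-β₀) ^ n) n u hu]
      simpa using h
    obtain ⟨m, hm, hm0⟩ := (((eventually_all_finite hfin).2 fun u hu =>
      (hrow u hu).eventually_lt_const one_pos).and (eventually_ne_atTop 0)).exists
    have hnear : ∀ᶠ β in 𝓝 β₀, ∀ u ∈ NW A, (∑' w, Apow A m u w) * expb (-β) ^ m < 1 := by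
      refine (eventually_all_finite hfin).2 fun u hu => ?_
      have hcont : Tendsto (fun β => expb (-β) ^ m) (𝓝 β₀) (𝓝 (expb (-β₀) ^ m)) :=
        ((ENNReal.continuous_pow m).comp (continuous_expb.comp continuous_neg)).tendsto β₀
      exact (ENNReal.Tendsto.const_mul hcont
        (Or.inl (pow_ne_zero _ (expb_ne_zero _)))).eventually_lt_const (hm u hu)
    obtain ⟨β, hβ, hββ₀⟩ :=
      ((hnear.filter_mono nhdsWithin_le_nhds).and (self_mem_nhdsWithin (s := Set.Iio β₀))).exists
    obtain ⟨K, hK, hKle⟩ := exists_tsum_Apow_mul_pow_le hN hfin hpow (expb_ne_top (-β)) hm0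
      fun u hu => (hβ u hu).le
    refine absurd (limsup_rpow_inv_le (a := fun n => Apow A n v v) hK fun n => ?_)
      (not_le.2 (hβ₀ v hv ▸ expb_lt_expb hββ₀))
    exact le_trans (by gcongr; exact ENNReal.le_tsum v) (hKle n v hv)
  · intro β hβ ξ hξ
    refine (hξ.eq_zero_or_pos hcof).resolve_right fun hpos => ?_
    obtain ⟨v, hv⟩ := hne
    have hdiag := tendsto_mul_pow_of_limsup_lt (hβ₀ v hv ▸ expb_lt_expb hβ)
    have hlim := tendsto_finsetSum hfin.toFinset fun w hw =>
      ENNReal.Tendsto.mul_const (htend β v hv hdiag v hv w (by simpa using hw))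
        (Or.inr (hξ.1 w))
    have hconst : ∀ n, ∑ w ∈ hfin.toFinset, Apow A n v w * expb (-β) ^ n * ξ w = ξ v := by
      intro n
      simp_rw [mul_right_comm _ (expb (-β) ^ n), ← Finset.sum_mul, ← hsum ξ n v hv,
        hξ.tsum_Apow_mul, mul_right_comm _ (ξ v), ← mul_pow, expb_mul_expb_neg, one_pow, one_mul]
    simp only [hconst, zero_mul, Finset.sum_const_zero] at hlim
    exact hpos v (tendsto_nhds_unique tendsto_const_nhds hlim)
end
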